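/- Let m ≥ 1, let γ_0 ∈ ℕ and γ = (γ_1,…,γ_m) ∈ ℕ^m satisfy γ_0 | γ_1 | γ_2 | ⋯ | γ_m, and let f_1,…,f_{m+1} be arithmetic functions. Then the multivariable Dirichlet series Σ_{n_1,…,n_{m+1}=1}^∞ a_{γ_0}(n_1) S^{(γ_1,…,γ_m)}_{f_1,…,f_{m+1}}(n_1,…,n_{m+1}) n_1^{-s_1}⋯n_{m+1}^{-s_{m+1}} equals ∏_{j=2}^{m+1} ζ(s_j) · ∏_{j=1}^{m+1} L(s_1+⋯+s_j; f_j^{[γ_{j-1}]}) for all (s_1,…,s_{m+1}) ∈ ℂ^{m+1} with Re(s_j) > 1 for 2 ≤ j ≤ m+1 and Re(s_1+⋯+s_j) > σ(f_j) for 1 ≤ j ≤ m+1. In particular, taking γ_0 = 1, Σ_{n_1,…,n_{m+1}} S^γ_f(n_1,…,n_{m+1}) ∏ n_j^{-s_j} = ∏_{j=2}^{m+1} ζ(s_j) · L(s_1;f_1) ∏_{j=2}^{m+1} L(s_1+⋯+s_j; f_j^{[γ_{j-1}]}). -/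

import Mathlib

/-!
The proof is by induction on `m`. In the sum over `n_1, n_2, …` expand the outermost sum of the
multiple Ramanujan sum over `D = d ^ γ_1 ∣ gcd(n_1, n_2)` and write `n_1 = k D`, `n_2 = l D`
(`glue`). Since `γ_0 ∣ γ_1`, `D` is a `γ_0`-th power, so `a_{γ_0}(k D) = a_{γ_0}(k)`, and the general
term factors as
`a_{γ_0}(k) f_1(k) k^{-s_1} · l^{-s_2} · a_{γ_1}(D) S(D, n_3, …) D^{-(s_1+s_2)} n_3^{-s_3} ⋯`
(`hasSum_fiber`). Summing over `k` and `l` gives `L(s_1; f_1^{[γ_0]})` and `ζ(s_2)`; the remaining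
sum over `(D, n_3, …)` is a series of the same kind in one variable fewer, with leading exponent
`γ_1` and variables `(s_1 + s_2, s_3, …)`, so the induction hypothesis applies
(`hasSum_ramTerm`). All series converge absolutely, which justifies the regrouping.
-/

open scoped BigOperators

/-- The multiple Ramanujan sum `S^{(γ_1,…,γ_m)}_{f_1,…,f_{m+1}}(n_1,…,n_{m+1})`.
By the convention `f(x) = 0` for non-integral `x`, the defining sum collapses to
this recursion.  For `m = 0`, `S_f(n) = f(n)`. -/
noncomputable def mRam : List ℕ → List (ℕ → ℂ) → List ℕ → ℂ
  | [], f :: _, n :: _ => f n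
  | γ :: γs, f :: fs, n₁ :: n₂ :: ns =>
      ∑ d ∈ (Nat.gcd n₁ n₂).divisors.filter (fun d => d ^ γ ∣ Nat.gcd n₁ n₂),
        f (n₁ / d ^ γ) * mRam γs fs (d ^ γ :: ns)
  | _, _, _ => 0

open Classical in
/-- `a_γ(n) = 1` if `n` is the γ-th power of a positive integer, `0` otherwise. -/
noncomputable def aPow (γ n : ℕ) : ℂ :=
  if ∃ d : ℕ, 0 < d ∧ n = d ^ γ then 1 else 0

section

open Finset

/-- If `a ∣ b`, multiplying by a `b`-th power, which is also an `a`-th power, does not affect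
whether a number is an `a`-th power. This is the only use of the divisibility chain. -/
lemma aPow_mul_of_dvd {a b : ℕ} (ha : 0 < a) (hab : a ∣ b) (k d : ℕ) (hd : 0 < d) (hk : 0 < k) :
    aPow a (k * d ^ b) = aPow a k := by
  obtain ⟨c, rfl⟩ := hab
  unfold aPow
  congr 1
  refine propext ⟨?_, ?_⟩
  · rintro ⟨e, he, h⟩
    rw [mul_comm a c, pow_mul] at h
    have hdvd : (d ^ c) ^ a ∣ e ^ a := ⟨k, by rw [← h, mul_comm]⟩
    rw [Nat.pow_dvd_pow_iff ha.ne'] at hdvd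
    obtain ⟨q, rfl⟩ := hdvd
    refine ⟨q, Nat.pos_of_mul_pos_left he, ?_⟩
    rw [mul_pow, mul_comm] at h
    exact Nat.eq_of_mul_eq_mul_left (by positivity) h
  · rintro ⟨e, he, rfl⟩
    exact ⟨e * d ^ c, by positivity, by rw [mul_pow, ← pow_mul, mul_comm c a]⟩

lemma norm_aPow_le_one (a n : ℕ) : ‖aPow a n‖ ≤ 1 := by
  unfold aPow; split_ifs <;> simp

lemma aPow_pow {a d : ℕ} (hd : 0 < d) : aPow a (d ^ a) = 1 :=
  if_pos ⟨d, hd, rfl⟩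

lemma exists_of_aPow_ne_zero {a n : ℕ} (h : aPow a n ≠ 0) : ∃ d : ℕ, 0 < d ∧ n = d ^ a := by
  unfold aPow at h
  by_contra hc
  exact h (if_neg hc)

lemma aPow_one {n : ℕ} (hn : 0 < n) : aPow 1 n = 1 := if_pos ⟨n, hn, by simp⟩

/-- `LSeries` sums over `ℕ` with a zero term at `0`; this is the same series over `ℕ+`. -/
lemma hasSum_pnat_LSeries {f : ℕ → ℂ} {s : ℂ} (h : LSeriesSummable f s) :
    HasSum (fun n : ℕ+ => f n * (n : ℂ) ^ (-s)) (LSeries f s) := by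
  have h1 : HasSum (LSeries.term f s) (LSeries f s) := h.LSeriesHasSum
  rw [← PNat.coe_injective.hasSum_iff (f := LSeries.term f s)] at h1
  · convert h1 using 2 with n
    simp [Complex.cpow_neg, div_eq_mul_inv]
  · intro n hn
    rcases Nat.eq_zero_or_pos n with rfl | h0
    · simp
    · exact absurd ⟨⟨n, h0⟩, rfl⟩ hn

lemma hasSum_pnat_zeta {s : ℂ} (h : 1 < s.re) :
    HasSum (fun n : ℕ+ => (n : ℂ) ^ (-s)) (riemannZeta s) := by
  have := hasSum_pnat_LSeries (LSeriesSummable_one_iff.mpr h)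
  simpa [LSeries_one_eq_riemannZeta h] using this

lemma hasSum_aPow_mul {f : ℕ → ℂ} {s : ℂ} (a : ℕ)
    (h : LSeries.abscissaOfAbsConv f < ((s.re : ℝ) : EReal)) :
    HasSum (fun n : ℕ+ => aPow a n * f n * (n : ℂ) ^ (-s))
      (LSeries (fun x => aPow a x * f x) s) := by
  refine hasSum_pnat_LSeries (f := fun x => aPow a x * f x) ?_
  have h1 := LSeriesSummable_of_abscissaOfAbsConv_lt_re h
  refine Summable.of_norm_bounded h1.norm fun n => LSeries.norm_term_le s ?_
  rw [norm_mul]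
  exact mul_le_of_le_one_left (norm_nonneg _) (norm_aPow_le_one a n)

lemma hasSum_mul_prod {α β : Type*} {u : α → ℂ} {v : β → ℂ} {a b : ℂ}
    (hu : HasSum u a) (hv : HasSum v b) :
    HasSum (fun p : α × β => u p.1 * v p.2) (a * b) :=
  hu.mul hv (summable_mul_of_summable_norm hu.summable.norm hv.summable.norm)

/-- The substitution `((k, l), (D, n₃, …)) ↦ (k D, l D, n₃, …)`. Its fibre over `(n₁, n₂, n₃, …)`
is parametrized by the common divisors `D` of `n₁` and `n₂`. -/
def glue {m : ℕ} (p : (ℕ+ × ℕ+) × (Fin (m + 1) → ℕ+)) : Fin (m + 2) → ℕ+ :=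
  Fin.cons (p.1.1 * p.2 0) (Fin.cons (p.1.2 * p.2 0) (Fin.tail p.2))

/-- The general term `a_{γ_0}(n_1) S^γ_f(n_1,…,n_{m+1}) n_1^{-s_1} ⋯ n_{m+1}^{-s_{m+1}}` of the
multivariable Dirichlet series, with all exponents collected as `Γ = (γ_0, γ_1, …, γ_m)`. -/
noncomputable def ramTerm {m : ℕ} (Γ : Fin (m + 1) → ℕ) (f : Fin (m + 1) → ℕ → ℂ)
    (s : Fin (m + 1) → ℂ) (v : Fin (m + 1) → ℕ+) : ℂ :=
  aPow (Γ 0) (v 0) * mRam (List.ofFn fun j : Fin m => Γ j.succ) (List.ofFn f)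
      (List.ofFn fun j => (v j : ℕ)) * ∏ j, ((v j : ℕ) : ℂ) ^ (-(s j))

/-- Over each fibre of `glue`, the product of an `L`-term, a `ζ`-term and a term of the series with
one variable fewer sums to `ramTerm Γ f s n`. The factor `a_{γ_1}(D)` in the shorter term
restricts `D` to `D = d ^ γ_1`, and this finite sum over `d` is the recursion defining `mRam`. -/
lemma hasSum_fiber {m : ℕ} (Γ : Fin (m + 2) → ℕ) (f : Fin (m + 2) → ℕ → ℂ)
    (s : Fin (m + 2) → ℂ) (hpos : ∀ j, 0 < Γ j) (hdvd : Γ 0 ∣ Γ 1) (n : Fin (m + 2) → ℕ+) :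
    HasSum (fun p : {p : (ℕ+ × ℕ+) × (Fin (m + 1) → ℕ+) // glue p = n} =>
      ((aPow (Γ 0) p.1.1.1 * f 0 p.1.1.1 * ((p.1.1.1 : ℕ) : ℂ) ^ (-(s 0))) *
        ((p.1.1.2 : ℕ) : ℂ) ^ (-(s 1))) *
        ramTerm (Fin.tail Γ) (Fin.tail f) (Fin.cons (s 0 + s 1) (Fin.tail (Fin.tail s))) p.1.2)
      (ramTerm Γ f s n) := by
  set T := (Nat.gcd (n 0) (n 1)).divisors.filter
    (fun d => d ^ (Γ 1) ∣ Nat.gcd (n 0) (n 1)) with hT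
  have hTpos : ∀ d ∈ T, 0 < d := fun d hd =>
    Nat.pos_of_mem_divisors (mem_filter.mp hd).1
  have hT0 : ∀ d ∈ T, d ^ Γ 1 ∣ (n 0 : ℕ) := fun d hd =>
    (mem_filter.mp hd).2.trans (Nat.gcd_dvd_left _ _)
  have hT1 : ∀ d ∈ T, d ^ Γ 1 ∣ (n 1 : ℕ) := fun d hd =>
    (mem_filter.mp hd).2.trans (Nat.gcd_dvd_right _ _)
  -- The part of the fibre on which `D` is a `γ_1`-th power, as the image of `d ∈ T`.
  let e : T → {p : (ℕ+ × ℕ+) × (Fin (m + 1) → ℕ+) // glue p = n} := fun d =>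
    ⟨((⟨n 0 / d.1 ^ Γ 1, Nat.div_pos (Nat.le_of_dvd (n 0).pos (hT0 _ d.2))
        (pow_pos (hTpos _ d.2) _)⟩,
       ⟨n 1 / d.1 ^ Γ 1, Nat.div_pos (Nat.le_of_dvd (n 1).pos (hT1 _ d.2))
        (pow_pos (hTpos _ d.2) _)⟩),
      Fin.cons ⟨d.1 ^ Γ 1, pow_pos (hTpos _ d.2) _⟩ (Fin.tail (Fin.tail n))), by
      funext j
      refine Fin.cases ?_ (fun j => Fin.cases ?_ (fun j => ?_) j) j
      · apply PNat.eq
        exact Nat.div_mul_cancel (hT0 _ d.2)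
      · apply PNat.eq
        exact Nat.div_mul_cancel (hT1 _ d.2)
      · rfl⟩
  have he : Function.Injective e := by
    intro d d₂ h
    have h0 : d.1 ^ Γ 1 = d₂.1 ^ Γ 1 := by
      exact congrArg (fun p => ((p.1.2 0 : ℕ+) : ℕ)) h
    exact Subtype.ext (Nat.pow_left_injective (hpos 1).ne' h0)
  rw [← he.hasSum_iff]
  · have key : ramTerm Γ f s n = ∑ d : T,
        ((fun p : {p : (ℕ+ × ℕ+) × (Fin (m + 1) → ℕ+) // glue p = n} =>
      ((aPow (Γ 0) p.1.1.1 * f 0 p.1.1.1 * ((p.1.1.1 : ℕ) : ℂ) ^ (-(s 0))) *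
        ((p.1.1.2 : ℕ) : ℂ) ^ (-(s 1))) *
        ramTerm (Fin.tail Γ) (Fin.tail f) (Fin.cons (s 0 + s 1) (Fin.tail (Fin.tail s))) p.1.2)
        ∘ e) d := by
      have hm : mRam (List.ofFn fun j : Fin (m + 1) => Γ j.succ) (List.ofFn f)
          (List.ofFn fun j => (n j : ℕ)) = ∑ d ∈ T, f 0 (n 0 / d ^ Γ 1) *
            mRam (List.ofFn fun j : Fin m => Γ j.succ.succ) (List.ofFn fun j => f j.succ)
              (d ^ Γ 1 :: List.ofFn fun j : Fin m => (n j.succ.succ : ℕ)) := by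
        simp only [List.ofFn_succ, mRam]
        rfl
      rw [ramTerm, hm, mul_sum, sum_mul, ← sum_coe_sort T]
      refine sum_congr rfl fun d _ => ?_
      have hd := hTpos _ d.2
      set D : ℕ := d.1 ^ Γ 1 with hD
      have hDpos : 0 < D := pow_pos hd _
      obtain ⟨k, hk⟩ := hT0 _ d.2
      obtain ⟨l, hl⟩ := hT1 _ d.2
      rw [← hD] at hk hl
      have hkpos : 0 < k := Nat.pos_of_mul_pos_left (hk ▸ (n 0).pos)
      have hkd : (n 0 : ℕ) / D = k := by rw [hk]; exact Nat.mul_div_cancel_left _ hDpos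
      have hld : (n 1 : ℕ) / D = l := by rw [hl]; exact Nat.mul_div_cancel_left _ hDpos
      have ha : aPow (Γ 0) (n 0) = aPow (Γ 0) k := by
        rw [hk, mul_comm, hD]
        exact aPow_mul_of_dvd (hpos 0) hdvd k d hd hkpos
      have ha1 : aPow (Γ 1) D = 1 := aPow_pow hd
      have hc0 : ((n 0 : ℕ) : ℂ) ^ (-(s 0)) = (D : ℂ) ^ (-(s 0)) * (k : ℂ) ^ (-(s 0)) := by
        rw [hk, Nat.cast_mul, Complex.natCast_mul_natCast_cpow]
      have hc1 : ((n 1 : ℕ) : ℂ) ^ (-(s 1)) = (D : ℂ) ^ (-(s 1)) * (l : ℂ) ^ (-(s 1)) := by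
        rw [hl, Nat.cast_mul, Complex.natCast_mul_natCast_cpow]
      have hcD : (D : ℂ) ^ (-(s 0 + s 1)) = (D : ℂ) ^ (-(s 0)) * (D : ℂ) ^ (-(s 1)) := by
        rw [neg_add, Complex.cpow_add _ _ (by exact_mod_cast hDpos.ne')]
      have hr : ramTerm (Fin.tail Γ) (Fin.tail f)
          (Fin.cons (s 0 + s 1) (Fin.tail (Fin.tail s))) (e d).1.2 =
          mRam (List.ofFn fun j : Fin m => Γ j.succ.succ) (List.ofFn fun j => f j.succ)
              (D :: List.ofFn fun j : Fin m => (n j.succ.succ : ℕ)) *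
            ((D : ℂ) ^ (-(s 0 + s 1)) *
              ∏ j : Fin m, ((n j.succ.succ : ℕ) : ℂ) ^ (-(s j.succ.succ))) := by
        have : (Fin.tail Γ) 0 = Γ 1 := rfl
        rw [ramTerm, this, Fin.prod_univ_succ, List.ofFn_succ (f := fun j => (((e d).1.2 j : ℕ+) : ℕ))]
        simp only [e, Fin.cons_zero, Fin.cons_succ, ← hD]
        change aPow (Γ 1) D * _ * _ = _
        rw [ha1, one_mul]
        rfl
      simp only [Function.comp_apply, hr]
      simp only [e, PNat.mk_coe, ← hD, hkd, hld, ha]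
      rw [Fin.prod_univ_succ, Fin.prod_univ_succ, Fin.succ_zero_eq_one, hc0, hc1, hcD]
      ring
    rw [key]
    exact hasSum_fintype _
  · -- Outside the range of `e`, `D = v 0` is not a `γ_1`-th power, so the term vanishes.
    rintro ⟨⟨⟨k, l⟩, v⟩, hp⟩ hnot
    have h0 : (n 0 : ℕ) = k * v 0 := by rw [← hp]; simp [glue]
    have h1 : (n 1 : ℕ) = l * v 0 := by rw [← hp]; rfl
    have ht : Fin.tail (Fin.tail n) = Fin.tail v := by rw [← hp]; rfl
    have hz : aPow (Γ 1) (v 0) = 0 := by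
      by_contra hne
      obtain ⟨d, hd, hvd⟩ := exists_of_aPow_ne_zero hne
      have hg : d ^ Γ 1 ∣ Nat.gcd (n 0) (n 1) :=
        Nat.dvd_gcd (h0 ▸ hvd ▸ dvd_mul_left _ _) (h1 ▸ hvd ▸ dvd_mul_left _ _)
      have hdT : d ∈ T := by
        rw [hT, mem_filter, Nat.mem_divisors]
        exact ⟨⟨(dvd_pow_self d (hpos 1).ne').trans hg,
          (Nat.gcd_pos_of_pos_left _ (n 0).pos).ne'⟩, hg⟩
      refine hnot ⟨⟨d, hdT⟩, ?_⟩
      have hvpos := (v 0).pos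
      refine Subtype.ext (Prod.ext (Prod.ext (PNat.eq ?_) (PNat.eq ?_)) ?_)
      · simp only [e, PNat.mk_coe, ← hvd, h0]
        exact Nat.mul_div_cancel _ hvpos
      · simp only [e, PNat.mk_coe, ← hvd, h1]
        exact Nat.mul_div_cancel _ hvpos
      · simp only [e, ← hvd, ht]
        exact Fin.cons_self_tail v
    have : (Fin.tail Γ) 0 = Γ 1 := rfl
    simp [ramTerm, this, hz]

/-- The factorization as an unconditional `HasSum`, hence including absolute convergence, which the
induction on `m` needs in order to multiply series. The partial sums `t j = s 0 + ⋯ + s j` enter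
through their recurrence, so that in the inductive step they are simply shifted by one index. -/
lemma hasSum_ramTerm (m : ℕ) : ∀ (Γ : Fin (m + 1) → ℕ) (f : Fin (m + 1) → ℕ → ℂ)
    (s t : Fin (m + 1) → ℂ), (∀ j, 0 < Γ j) → (∀ j : Fin m, Γ j.castSucc ∣ Γ j.succ) →
    t 0 = s 0 → (∀ j : Fin m, t j.succ = t j.castSucc + s j.succ) →
    (∀ j : Fin m, 1 < (s j.succ).re) →
    (∀ j, LSeries.abscissaOfAbsConv (f j) < (((t j).re : ℝ) : EReal)) →
    HasSum (ramTerm Γ f s)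
      ((∏ j : Fin m, riemannZeta (s j.succ)) *
        ∏ j, LSeries (fun x => aPow (Γ j) x * f j x) (t j)) := by
  induction m with
  | zero =>
    intro Γ f s t _ _ ht0 _ _ hs2
    have h := hasSum_aPow_mul (Γ 0) (hs2 0)
    rw [← (Equiv.funUnique (Fin 1) ℕ+).hasSum_iff] at h
    have hfun : ramTerm Γ f s =
        (fun n : ℕ+ => aPow (Γ 0) n * f 0 n * (n : ℂ) ^ (-t 0)) ∘ Equiv.funUnique (Fin 1) ℕ+ := by
      funext v
      simp [ramTerm, mRam, ht0]
    rw [hfun]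
    simpa using h
  | succ m ih =>
    intro Γ f s t hpos hch ht0 hts hs1 hs2
    have hA := hasSum_aPow_mul (Γ 0) (hs2 0)
    rw [ht0] at hA
    have hZ := hasSum_pnat_zeta (hs1 0)
    have ht1 : t 1 = s 0 + s 1 := by rw [← ht0]; exact hts 0
    have hI := ih (Fin.tail Γ) (Fin.tail f) (Fin.cons (s 0 + s 1) (Fin.tail (Fin.tail s)))
      (Fin.tail t) (fun j => hpos _) (fun j => hch j.succ) ht1
      (fun j => by simpa [Fin.tail] using hts j.succ)
      (fun j => by simpa [Fin.tail] using hs1 j.succ) (fun j => hs2 _)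
    have hAZ := hasSum_mul_prod hA hZ
    have hall := hasSum_mul_prod hAZ hI
    -- Regroup the sum along the fibres of `glue`.
    rw [← (Equiv.sigmaFiberEquiv (glue (m := m))).hasSum_iff] at hall
    have hfin := hall.sigma (g := ramTerm Γ f s)
      (fun n => hasSum_fiber Γ f s hpos (hch 0) n)
    convert hfin using 1
    rw [Fin.prod_univ_succ, Fin.prod_univ_succ (n := m + 1)]
    simp only [Fin.tail, Fin.cons_succ, ht0]
    ring

lemma Iic_sum_succ {m : ℕ} (s : Fin (m + 1) → ℂ) (j : Fin m) :
    ∑ i ∈ Iic j.succ, s i = ∑ i ∈ Iic j.castSucc, s i + s j.succ := by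
  have : Iic j.succ = insert j.succ (Iic j.castSucc) := by
    ext i
    simp only [mem_Iic, mem_insert, Fin.le_def, Fin.ext_iff, Fin.val_succ, Fin.val_castSucc]
    omega
  rw [this, sum_insert (by simp [Fin.le_def]), add_comm]

lemma prod_filter_ne_zero {m : ℕ} (g : Fin (m + 1) → ℂ) :
    ∏ j ∈ univ.filter (fun j : Fin (m + 1) => j ≠ 0), g j = ∏ j : Fin m, g j.succ := by
  rw [prod_filter, Fin.prod_univ_succ]
  simp [Fin.succ_ne_zero]

end

/-- Theorem 3.4: if `γ_0 ∣ γ_1 ∣ ⋯ ∣ γ_m` then, in the indicated region,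
`L(s; a_{γ_0} S^γ_f) = ∏_{j=2}^{m+1} ζ(s_j) · ∏_{j=1}^{m+1} L(s_1+⋯+s_j; f_j^{[γ_{j-1}]})`,
and in particular (for `γ_0 = 1`)
`L(s; S^γ_f) = ∏_{j=2}^{m+1} ζ(s_j) · L(s_1;f_1) ∏_{j=2}^{m+1} L(s_1+⋯+s_j; f_j^{[γ_{j-1}]})`.
Indices `j : Fin (m+1)` are `0`-based, so `j = 0` corresponds to `j = 1` in the paper,
and `∑_{i ∈ Iic j} s i = s_1 + ⋯ + s_{j+1}`. -/
theorem stmt_10 (m : ℕ) (hm : 1 ≤ m) (γ₀ : ℕ) (hγ₀ : 0 < γ₀)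
    (γ : Fin m → ℕ) (hγpos : ∀ j, 0 < γ j)
    (hchain0 : γ₀ ∣ γ ⟨0, hm⟩)
    (hchain : ∀ i : Fin m, ∀ h : (i : ℕ) + 1 < m, γ i ∣ γ ⟨(i : ℕ) + 1, h⟩)
    (f : Fin (m + 1) → ℕ → ℂ) (s : Fin (m + 1) → ℂ)
    (hs1 : ∀ j : Fin (m + 1), j ≠ 0 → 1 < (s j).re)
    (hs2 : ∀ j : Fin (m + 1),
      LSeries.abscissaOfAbsConv (f j) < (((∑ i ∈ Finset.Iic j, s i).re : ℝ) : EReal)) :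
    (∑' nn : Fin (m + 1) → ℕ+,
        aPow γ₀ (nn 0) * mRam (List.ofFn γ) (List.ofFn f)
            (List.ofFn fun j => ((nn j : ℕ))) *
          ∏ j : Fin (m + 1), ((nn j : ℕ) : ℂ) ^ (-(s j))
      = (∏ j ∈ Finset.univ.filter (fun j : Fin (m + 1) => j ≠ 0), riemannZeta (s j)) *
          ∏ j : Fin (m + 1),
            LSeries (fun x => aPow (Fin.cases γ₀ γ j) x * f j x) (∑ i ∈ Finset.Iic j, s i))
    ∧
    (γ₀ = 1 →
      ∑' nn : Fin (m + 1) → ℕ+,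
          mRam (List.ofFn γ) (List.ofFn f) (List.ofFn fun j => ((nn j : ℕ))) *
            ∏ j : Fin (m + 1), ((nn j : ℕ) : ℂ) ^ (-(s j))
        = (∏ j ∈ Finset.univ.filter (fun j : Fin (m + 1) => j ≠ 0), riemannZeta (s j)) *
            (LSeries (f 0) (s 0) *
              ∏ j ∈ Finset.univ.filter (fun j : Fin (m + 1) => j ≠ 0),
                LSeries (fun x => aPow (Fin.cases γ₀ γ j) x * f j x)
                  (∑ i ∈ Finset.Iic j, s i))) := by
  have hH := hasSum_ramTerm m (fun j => Fin.cases γ₀ γ j) f s (fun j => ∑ i ∈ Finset.Iic j, s i)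
    (fun j => Fin.cases hγ₀ hγpos j)
    (fun j => by
      obtain ⟨i, hi⟩ := j
      cases i with
      | zero => exact hchain0
      | succ i => exact hchain ⟨i, by omega⟩ hi)
    (by simp [show Finset.Iic (0 : Fin (m + 1)) = {0} from by ext i; simp])
    (Iic_sum_succ s) (fun j => hs1 _ (Fin.succ_ne_zero j)) hs2
  have h1 := hH.tsum_eq
  rw [← prod_filter_ne_zero (fun j => riemannZeta (s j))] at h1
  refine ⟨h1, ?_⟩
  rintro rfl
  -- For `γ₀ = 1` the indicator factors are identically `1` on positive integers.
  have hL : LSeries (fun x => aPow 1 x * f 0 x) (s 0) = LSeries (f 0) (s 0) :=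
    LSeries_congr (fun {n} hn => by rw [aPow_one (Nat.pos_of_ne_zero hn), one_mul]) _
  have h0 : ∑ i ∈ Finset.Iic (0 : Fin (m + 1)), s i = s 0 := by
    simp [show Finset.Iic (0 : Fin (m + 1)) = {0} from by ext i; simp]
  rw [Fin.prod_univ_succ] at h1
  rw [prod_filter_ne_zero (fun j => LSeries _ _), ← hL]
  rw [h0] at h1
  refine Eq.trans (tsum_congr fun nn => ?_) h1
  simp only [ramTerm, Fin.cases_zero, aPow_one (nn 0).pos, one_mul, Fin.cases_succ]
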